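/- (Smallness of the gradient in L^q near the blow-up point.) Under the blow-up setup, for every q with 1 ≤ q < 2 and every ε' ∈ (0, 1/4), the L^q norm of the gradient of u_i over the ball B(x_i, δ_i ε') tends to zero: ( ∫_{B(x_i, δ_i ε')} |∇u_i|^q dy )^{1/q} → 0 as i → ∞. -/

import Mathlib

open MeasureTheory Filter Metric

abbrev E2 := EuclideanSpace ℝ (Fin 2)

noncomputable def pd (j : Fin 2) (u : E2 → ℝ) (x : E2) : ℝ :=
  fderiv ℝ u x (EuclideanSpace.single j 1)

noncomputable def lapl (u : E2 → ℝ) (x : E2) : ℝ :=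
  pd 0 (pd 0 u) x + pd 1 (pd 1 u) x

/-!
The equation makes `u` superharmonic, so `u ≥ 0` by the minimum principle and `w = 1 + u ≥ 1` is
superharmonic as well. Testing `-Δ w ≥ 0` against `χ ^ 2 / w` bounds `∫ ‖∇u‖ ^ 2 / (1 + u) ^ 2`
over a smaller ball by the Dirichlet energy of the cutoff `χ`, which is of order `R ^ (n - 2)` on
balls of radius `R` in dimension `n` and so stays bounded as `R → 0` when `n ≥ 2`. Since `q < 2`,
for every `ε > 0` one has `‖∇u‖ ^ q ≤ ε (‖∇u‖ ^ 2 / (1 + u) ^ 2 + exp u) + K_ε`; the first term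
integrates to `O(ε)`, and the second to `O(R ^ n) → 0`.
-/

open Module (finrank)
open scoped Laplacian Topology

section Laplacian

lemma deriv_deriv_nonneg_of_isLocalMin {f : ℝ → ℝ} {t : ℝ} (hmin : IsLocalMin f t)
    (hf : ContinuousAt f t) : 0 ≤ deriv (deriv f) t := by
  by_contra! hneg
  have hmax : IsLocalMax f t := isLocalMax_of_deriv_deriv_neg hneg hmin.deriv_eq_zero hf
  have hconst : f =ᶠ[𝓝 t] fun _ => f t := by
    filter_upwards [hmin, hmax] with s hs_min hs_max
    exact le_antisymm hs_max hs_min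
  have hzero : deriv (deriv f) t = 0 := by
    rw [hconst.deriv.deriv_eq, deriv_const', deriv_const]
  exact hneg.ne hzero

lemma fderiv_fderiv_apply {E F : Type*} [NormedAddCommGroup E] [NormedSpace ℝ E]
    [NormedAddCommGroup F] [NormedSpace ℝ F] {f : E → F} {x : E}
    (hf : ContDiffAt ℝ 2 f x) (v w : E) :
    fderiv ℝ (fun y => fderiv ℝ f y v) x w = fderiv ℝ (fderiv ℝ f) x w v := by
  have hf' : DifferentiableAt ℝ (fderiv ℝ f) x :=
    (hf.fderiv_right (m := 1) (by norm_num)).differentiableAt one_ne_zero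
  simp [fderiv_clm_apply hf' (differentiableAt_const v)]

lemma fderiv_fderiv_nonneg_of_isLocalMin {E : Type*} [NormedAddCommGroup E] [NormedSpace ℝ E]
    {f : E → ℝ} {x : E} (hf : ContDiffAt ℝ 2 f x) (hmin : IsLocalMin f x) (v : E) :
    0 ≤ fderiv ℝ (fderiv ℝ f) x v v := by
  have hline (t : ℝ) : HasDerivAt (fun t : ℝ => x + t • v) v t := by
    simpa using ((hasDerivAt_id t).smul_const v).const_add x
  have hline_zero : x + (0 : ℝ) • v = x := by simp
  have htend : Tendsto (fun t : ℝ => x + t • v) (𝓝 0) (𝓝 x) := by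
    simpa using (hline 0).continuousAt.tendsto
  have hderiv : deriv (fun t : ℝ => f (x + t • v)) =ᶠ[𝓝 0] fun t => fderiv ℝ f (x + t • v) v := by
    filter_upwards [htend.eventually (hf.eventually (by simp))] with t ht
    exact ((ht.differentiableAt two_ne_zero).hasFDerivAt.comp_hasDerivAt t (hline t)).deriv
  have hdir : DifferentiableAt ℝ (fun y => fderiv ℝ f y v) (x + (0 : ℝ) • v) := by
    rw [hline_zero]
    exact ((hf.fderiv_right (m := 1) (by norm_num)).clm_apply contDiffAt_const).differentiableAt
      one_ne_zero
  have hderiv₂ : deriv (deriv fun t : ℝ => f (x + t • v)) 0 = fderiv ℝ (fderiv ℝ f) x v v := by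
    rw [hderiv.deriv_eq, ← fderiv_fderiv_apply hf]
    have hcomp := (hdir.hasFDerivAt.comp_hasDerivAt 0 (hline 0)).deriv
    rwa [hline_zero] at hcomp
  rw [← hderiv₂]
  refine deriv_deriv_nonneg_of_isLocalMin ?_ ?_
  · filter_upwards [htend.eventually hmin] with t ht
    simpa using ht
  · exact ContinuousAt.comp (by simpa using hf.continuousAt) (hline 0).continuousAt

variable {E : Type*} [NormedAddCommGroup E] [InnerProductSpace ℝ E] [FiniteDimensional ℝ E]

lemma laplacian_eq_sum_fderiv_fderiv {ι : Type*} [Fintype ι] (b : OrthonormalBasis ι ℝ E)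
    (f : E → ℝ) (x : E) : Δ f x = ∑ i, fderiv ℝ (fderiv ℝ f) x (b i) (b i) := by
  simp [InnerProductSpace.laplacian_eq_iteratedFDeriv_orthonormalBasis f b,
    iteratedFDeriv_two_apply]

lemma laplacian_nonneg_of_isLocalMin {f : E → ℝ} {x : E} (hf : ContDiffAt ℝ 2 f x)
    (hmin : IsLocalMin f x) : 0 ≤ Δ f x := by
  rw [laplacian_eq_sum_fderiv_fderiv (stdOrthonormalBasis ℝ E)]
  exact Finset.sum_nonneg fun i _ => fderiv_fderiv_nonneg_of_isLocalMin hf hmin _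

lemma laplacian_norm_sq (x : E) : Δ (fun y : E => ‖y‖ ^ 2) x = 2 * finrank ℝ E := by
  have hderiv : fderiv ℝ (fun y : E => ‖y‖ ^ 2) = (2 • innerSL ℝ : E →L[ℝ] StrongDual ℝ E) :=
    fderiv_norm_sq
  have hhess (v : E) : fderiv ℝ (fderiv ℝ fun y : E => ‖y‖ ^ 2) x v v = 2 * ‖v‖ ^ 2 := by
    rw [hderiv, ContinuousLinearMap.fderiv, ← real_inner_self_eq_norm_sq, two_mul, two_smul]
    rfl
  simp [laplacian_eq_sum_fderiv_fderiv (stdOrthonormalBasis ℝ E), hhess, mul_comm]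

end Laplacian

section Superharmonic

variable {E : Type*} [NormedAddCommGroup E] [InnerProductSpace ℝ E] [FiniteDimensional ℝ E]

/-- Classical superharmonicity, the notion in which the minimum principle and the interior gradient
estimates are stated. Differentiability is required on a full neighbourhood of each point of `U`, so
that `U` may be a closed set such as the support of a cutoff. -/
structure SuperharmonicOn (u : E → ℝ) (U : Set E) : Prop where
  contDiffAt : ∀ x ∈ U, ContDiffAt ℝ 2 u x
  laplacian_nonpos : ∀ x ∈ U, Δ u x ≤ 0

lemma SuperharmonicOn.mono {u : E → ℝ} {U W : Set E} (hu : SuperharmonicOn u U) (hWU : W ⊆ U) :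
    SuperharmonicOn u W :=
  ⟨fun x hx => hu.contDiffAt x (hWU hx), fun x hx => hu.laplacian_nonpos x (hWU hx)⟩

lemma SuperharmonicOn.const_add {u : E → ℝ} {U : Set E} (hu : SuperharmonicOn u U) (c : ℝ) :
    SuperharmonicOn (fun x => c + u x) U where
  contDiffAt x hx := contDiffAt_const.add (hu.contDiffAt x hx)
  laplacian_nonpos x hx := by
    have hadd := (contDiffAt_const (c := c)).laplacian_add (hu.contDiffAt x hx)
    rw [InnerProductSpace.laplacian_const] at hadd
    exact (hadd.trans (zero_add _)).trans_le (hu.laplacian_nonpos x hx)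

lemma SuperharmonicOn.nonneg_of_frontier_nonneg [Nontrivial E] {u : E → ℝ} {Ω : Set E}
    (hu : SuperharmonicOn u Ω) (hΩ : IsOpen Ω) (hb : Bornology.IsBounded Ω)
    (hc : ContinuousOn u (closure Ω)) (hfr : ∀ x ∈ frontier Ω, 0 ≤ u x) {y : E} (hy : y ∈ Ω) :
    0 ≤ u y := by
  by_contra! hneg
  obtain ⟨R, hR, hΩR⟩ := hb.closure.exists_pos_norm_le
  -- Subtracting `ε ‖x‖ ^ 2` makes the Laplacian strictly negative, which excludes interior minima.
  set ε : ℝ := -u y / (2 * R ^ 2)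
  have hε : 0 < ε := div_pos (neg_pos.mpr hneg) (by positivity)
  have hεR : ε * R ^ 2 < -u y := by
    have : ε * R ^ 2 = -u y / 2 := by simp only [ε]; field_simp
    linarith
  let ψ : E → ℝ := fun x => ‖x‖ ^ 2
  obtain ⟨z, hz, hzmin⟩ := hb.isCompact_closure.exists_isMinOn ⟨y, subset_closure hy⟩
    (hc.sub (g := ε • ψ) (by fun_prop))
  have hzy : u z - ε * ‖z‖ ^ 2 ≤ u y - ε * ‖y‖ ^ 2 := hzmin (subset_closure hy)
  have hz_neg : u z < 0 := by
    have : ε * ‖z‖ ^ 2 ≤ ε * R ^ 2 := by gcongr; exact hΩR z hz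
    nlinarith [sq_nonneg ‖y‖]
  have hzΩ : z ∈ Ω := by
    by_contra hzΩ
    exact hz_neg.not_ge (hfr z ⟨hz, by rwa [hΩ.interior_eq]⟩)
  have hψ : ContDiffAt ℝ 2 ψ z := (contDiff_norm_sq ℝ).contDiffAt
  have hεψ : ContDiffAt ℝ 2 (ε • ψ) z := hψ.const_smul ε
  have hlap : 0 ≤ Δ (u - ε • ψ) z :=
    laplacian_nonneg_of_isLocalMin ((hu.contDiffAt z hzΩ).sub hεψ)
      (hzmin.isLocalMin (mem_of_superset (hΩ.mem_nhds hzΩ) subset_closure))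
  rw [(hu.contDiffAt z hzΩ).laplacian_sub hεψ,
    InnerProductSpace.laplacian_smul ε hψ, laplacian_norm_sq, smul_eq_mul] at hlap
  have hdim : (0 : ℝ) < finrank ℝ E := by exact_mod_cast Module.finrank_pos
  nlinarith [hu.laplacian_nonpos z hzΩ, mul_pos hε hdim]

end Superharmonic

section Quotient

variable {E : Type*} [NormedAddCommGroup E] [NormedSpace ℝ E] {χ w : E → ℝ}

lemma contDiff_sq_div {n : WithTop ℕ∞} (hχ : ContDiff ℝ n χ)
    (hw : ∀ x ∈ tsupport χ, ContDiffAt ℝ n w x) (hw0 : ∀ x ∈ tsupport χ, w x ≠ 0) :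
    ContDiff ℝ n fun y => χ y ^ 2 / w y := by
  rw [contDiff_iff_contDiffAt]
  intro x
  by_cases hx : x ∈ tsupport χ
  · exact (hχ.contDiffAt.pow 2).div (hw x hx) (hw0 x hx)
  · refine (contDiffAt_const (c := (0 : ℝ))).congr_of_eventuallyEq ?_
    filter_upwards [notMem_tsupport_iff_eventuallyEq.mp hx] with y hy
    simp [hy]

lemma fderiv_sq_div {x : E} (hχ : DifferentiableAt ℝ χ x) (hw : DifferentiableAt ℝ w x)
    (hw0 : w x ≠ 0) (v : E) :
    fderiv ℝ (fun y => χ y ^ 2 / w y) x v =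
      2 * (χ x / w x) * fderiv ℝ χ x v - (χ x / w x) ^ 2 * fderiv ℝ w x v := by
  have hinv : HasFDerivAt (fun y => (w y)⁻¹) (-(w x ^ 2)⁻¹ • fderiv ℝ w x) x :=
    (hasDerivAt_inv hw0).comp_hasFDerivAt x hw.hasFDerivAt
  have hquot : HasFDerivAt (fun y => χ y ^ 2 / w y)
      (χ x ^ 2 • -(w x ^ 2)⁻¹ • fderiv ℝ w x + (w x)⁻¹ • (2 * χ x) • fderiv ℝ χ x) x := by
    simpa [div_eq_mul_inv] using (hχ.hasFDerivAt.pow 2).fun_mul hinv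
  simp only [hquot.fderiv, add_apply, smul_apply, smul_eq_mul]
  field_simp
  ring

lemma fderiv_sq_div_mul_fderiv_le (hχ : Differentiable ℝ χ)
    (hw : ∀ x ∈ tsupport χ, DifferentiableAt ℝ w x) (hw0 : ∀ x ∈ tsupport χ, w x ≠ 0) (y v : E) :
    fderiv ℝ (fun z => χ z ^ 2 / w z) y v * fderiv ℝ w y v ≤
      2 * fderiv ℝ χ y v ^ 2 - 1 / 2 * (χ y / w y * fderiv ℝ w y v) ^ 2 := by
  by_cases hy : y ∈ tsupport χ
  · rw [fderiv_sq_div (hχ y) (hw y hy) (hw0 y hy)]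
    nlinarith [sq_nonneg (χ y / w y * fderiv ℝ w y v - 2 * fderiv ℝ χ y v)]
  · have hsupp : tsupport (fun z => χ z ^ 2 / w z) ⊆ tsupport χ :=
      closure_mono fun z hz hχz => hz (by simp [hχz])
    simp [fderiv_of_notMem_tsupport (𝕜 := ℝ) hy,
      fderiv_of_notMem_tsupport (𝕜 := ℝ) (mt (@hsupp y) hy), image_eq_zero_of_notMem_tsupport hy]

end Quotient

lemma sum_fderiv_sq_div_mul_fderiv_le {E : Type*} [NormedAddCommGroup E]
    [InnerProductSpace ℝ E] {χ w : E → ℝ} {ι : Type*} [Fintype ι] (b : OrthonormalBasis ι ℝ E)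
    (hχ : Differentiable ℝ χ) (hw : ∀ x ∈ tsupport χ, DifferentiableAt ℝ w x)
    (hw0 : ∀ x ∈ tsupport χ, w x ≠ 0) (y : E) :
    ∑ i, fderiv ℝ (fun z => χ z ^ 2 / w z) y (b i) * fderiv ℝ w y (b i) ≤
      2 * ‖fderiv ℝ χ y‖ ^ 2 - 1 / 2 * (χ y * (‖fderiv ℝ w y‖ / w y)) ^ 2 := by
  calc ∑ i, fderiv ℝ (fun z => χ z ^ 2 / w z) y (b i) * fderiv ℝ w y (b i)
    _ ≤ ∑ i, (2 * fderiv ℝ χ y (b i) ^ 2 - 1 / 2 * (χ y / w y * fderiv ℝ w y (b i)) ^ 2) :=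
      Finset.sum_le_sum fun i _ => fderiv_sq_div_mul_fderiv_le hχ hw hw0 y (b i)
    _ = 2 * ‖fderiv ℝ χ y‖ ^ 2 - 1 / 2 * (χ y * (‖fderiv ℝ w y‖ / w y)) ^ 2 := by
      rw [mul_div_left_comm, mul_comm ‖_‖, mul_pow]
      simp only [mul_pow, b.norm_dual, Finset.sum_sub_distrib, Finset.mul_sum]

section Caccioppoli

lemma integrable_mul_of_continuousAt_tsupport {X : Type*} [TopologicalSpace X] [MeasurableSpace X]
    [OpensMeasurableSpace X] {μ : Measure X} [IsFiniteMeasureOnCompacts μ] {f g : X → ℝ}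
    (hf : Continuous f) (hfc : HasCompactSupport f) (hg : ∀ x ∈ tsupport f, ContinuousAt g x) :
    Integrable (fun x => f x * g x) μ := by
  have hcont : Continuous fun x => f x * g x := continuous_of_tsupport fun x hx =>
    hf.continuousAt.mul (hg x (tsupport_mul_subset_left hx))
  exact hcont.integrable_of_hasCompactSupport hfc.mul_right

variable {E : Type*} [NormedAddCommGroup E] [InnerProductSpace ℝ E] [FiniteDimensional ℝ E]
  [MeasurableSpace E] [BorelSpace E]

lemma integrable_fderiv_mul_fderiv {φ u : E → ℝ} (hφ : ContDiff ℝ 1 φ) (hφc : HasCompactSupport φ)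
    (hu : ∀ x ∈ tsupport φ, ContDiffAt ℝ 1 u x) (v : E) :
    Integrable fun y => fderiv ℝ φ y v * fderiv ℝ u y v :=
  integrable_mul_of_continuousAt_tsupport
    ((hφ.continuous_fderiv one_ne_zero).clm_apply continuous_const) (hφc.fderiv_apply (𝕜 := ℝ) v)
    fun x hx => (((hu x (tsupport_fderiv_apply_subset ℝ v hx)).fderiv_right
      (m := 0) le_rfl).clm_apply contDiffAt_const).continuousAt

lemma integral_mul_laplacian {ι : Type*} [Fintype ι] (b : OrthonormalBasis ι ℝ E) {φ u : E → ℝ}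
    (hφ : ContDiff ℝ 1 φ) (hφc : HasCompactSupport φ)
    (hu : ∀ x ∈ tsupport φ, ContDiffAt ℝ 2 u x) :
    ∫ y, φ y * Δ u y = -∫ y, ∑ i, fderiv ℝ φ y (b i) * fderiv ℝ u y (b i) := by
  have hDu (v : E) {x : E} (hx : x ∈ tsupport φ) : ContDiffAt ℝ 1 (fun y => fderiv ℝ u y v) x :=
    ((hu x hx).fderiv_right (by norm_num)).clm_apply contDiffAt_const
  have hDφDu (v : E) : Integrable fun y => fderiv ℝ φ y v * fderiv ℝ u y v :=
    integrable_fderiv_mul_fderiv hφ hφc (fun x hx => (hu x hx).of_le one_le_two) v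
  have hφDDu (v : E) : Integrable fun y => φ y * fderiv ℝ (fun z => fderiv ℝ u z v) y v :=
    integrable_mul_of_continuousAt_tsupport hφ.continuous hφc fun x hx =>
      (((hDu v hx).fderiv_right (m := 0) (by norm_num)).clm_apply contDiffAt_const).continuousAt
  have hφDu (v : E) : Integrable fun y => φ y * fderiv ℝ u y v :=
    integrable_mul_of_continuousAt_tsupport hφ.continuous hφc fun x hx => (hDu v hx).continuousAt
  have hlap (y : E) : φ y * Δ u y = ∑ i, φ y * fderiv ℝ (fun z => fderiv ℝ u z (b i)) y (b i) := by
    by_cases hy : y ∈ tsupport φ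
    · simp only [laplacian_eq_sum_fderiv_fderiv b, fderiv_fderiv_apply (hu y hy), Finset.mul_sum]
    · simp [image_eq_zero_of_notMem_tsupport hy]
  simp only [hlap]
  rw [integral_finsetSum _ fun i _ => hφDDu (b i), integral_finsetSum _ fun i _ => hDφDu (b i),
    ← Finset.sum_neg_distrib]
  refine Finset.sum_congr rfl fun i _ => ?_
  exact integral_mul_fderiv_eq_neg_fderiv_mul_of_integrable (hDφDu (b i)) (hφDDu (b i))
    (hφDu (b i)) (fun x _ => hφ.differentiable one_ne_zero x)
    fun x hx => (hDu (b i) hx).differentiableAt one_ne_zero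

lemma SuperharmonicOn.integral_sum_fderiv_mul_fderiv_nonneg {ι : Type*} [Fintype ι]
    (b : OrthonormalBasis ι ℝ E) {φ u : E → ℝ} (hφ : ContDiff ℝ 1 φ) (hφc : HasCompactSupport φ)
    (hφ0 : ∀ x, 0 ≤ φ x) (hu : SuperharmonicOn u (tsupport φ)) :
    0 ≤ ∫ y, ∑ i, fderiv ℝ φ y (b i) * fderiv ℝ u y (b i) := by
  rw [← neg_nonpos, ← integral_mul_laplacian b hφ hφc hu.contDiffAt]
  refine integral_nonpos fun y => ?_
  by_cases hy : y ∈ tsupport φ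
  · exact mul_nonpos_of_nonneg_of_nonpos (hφ0 y) (hu.laplacian_nonpos y hy)
  · simp [image_eq_zero_of_notMem_tsupport hy]

lemma integrable_sq_mul_norm_fderiv_div {χ w : E → ℝ} (hχ : Continuous χ)
    (hχc : HasCompactSupport χ) (hw : ∀ x ∈ tsupport χ, ContDiffAt ℝ 1 w x)
    (hw0 : ∀ x ∈ tsupport χ, w x ≠ 0) :
    Integrable fun y => (χ y * (‖fderiv ℝ w y‖ / w y)) ^ 2 := by
  have hcont : Continuous fun y => χ y * (‖fderiv ℝ w y‖ / w y) :=
    continuous_of_tsupport fun x hx =>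
      have hxχ := tsupport_mul_subset_left hx
      hχ.continuousAt.mul ((((hw x hxχ).fderiv_right (m := 0) le_rfl).continuousAt.norm).div
        (hw x hxχ).continuousAt (hw0 x hxχ))
  refine (hcont.pow 2).integrable_of_hasCompactSupport (hχc.mono fun z hz hχz => hz ?_)
  simp [hχz]

lemma SuperharmonicOn.integral_sq_mul_norm_fderiv_div_le {χ w : E → ℝ} (hχ : ContDiff ℝ 1 χ)
    (hχc : HasCompactSupport χ) (hw : SuperharmonicOn w (tsupport χ))
    (hw0 : ∀ x ∈ tsupport χ, 0 < w x) :
    ∫ y, (χ y * (‖fderiv ℝ w y‖ / w y)) ^ 2 ≤ 4 * ∫ y, ‖fderiv ℝ χ y‖ ^ 2 := by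
  let b := stdOrthonormalBasis ℝ E
  have hw1 : ∀ x ∈ tsupport χ, ContDiffAt ℝ 1 w x := fun x hx =>
    (hw.contDiffAt x hx).of_le one_le_two
  have hw_ne : ∀ x ∈ tsupport χ, w x ≠ 0 := fun x hx => (hw0 x hx).ne'
  set φ : E → ℝ := fun z => χ z ^ 2 / w z
  have hsupp : Function.support φ ⊆ Function.support χ := fun z hz hχz => hz (by simp [φ, hχz])
  have hφχ : tsupport φ ⊆ tsupport χ := closure_mono hsupp
  have hφ : ContDiff ℝ 1 φ := contDiff_sq_div hχ hw1 hw_ne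
  have hφ0 : ∀ x, 0 ≤ φ x := fun x => by
    by_cases hx : x ∈ tsupport χ
    · exact div_nonneg (sq_nonneg _) (hw0 x hx).le
    · simp [φ, image_eq_zero_of_notMem_tsupport hx]
  have hcross : 0 ≤ ∫ y, ∑ i, fderiv ℝ φ y (b i) * fderiv ℝ w y (b i) :=
    (hw.mono hφχ).integral_sum_fderiv_mul_fderiv_nonneg b hφ (hχc.mono hsupp) hφ0
  have hcross_int : Integrable fun y => ∑ i, fderiv ℝ φ y (b i) * fderiv ℝ w y (b i) :=
    integrable_finsetSum _ fun i _ =>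
      integrable_fderiv_mul_fderiv hφ (hχc.mono hsupp) (fun x hx => hw1 x (hφχ hx)) (b i)
  have hχ_int : Integrable fun y => 2 * ‖fderiv ℝ χ y‖ ^ 2 := by
    have hcont : Continuous fun y => ‖fderiv ℝ χ y‖ ^ 2 :=
      (hχ.continuous_fderiv one_ne_zero).norm.pow 2
    refine (hcont.integrable_of_hasCompactSupport ?_).const_mul 2
    exact (hχc.fderiv ℝ).mono fun z hz hχz => hz (by simp [hχz])
  have hw_int := (integrable_sq_mul_norm_fderiv_div hχ.continuous hχc hw1 hw_ne).const_mul (1 / 2)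
  have hle : ∫ y, ∑ i, fderiv ℝ φ y (b i) * fderiv ℝ w y (b i) ≤
      ∫ y, (2 * ‖fderiv ℝ χ y‖ ^ 2 - 1 / 2 * (χ y * (‖fderiv ℝ w y‖ / w y)) ^ 2) :=
    integral_mono hcross_int (hχ_int.sub hw_int) fun y =>
      sum_fderiv_sq_div_mul_fderiv_le b (hχ.differentiable one_ne_zero)
        (fun x hx => (hw1 x hx).differentiableAt one_ne_zero) hw_ne y
  rw [integral_sub hχ_int hw_int, integral_const_mul, integral_const_mul] at hle
  linarith

end Caccioppoli

section Cutoff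

variable {E : Type*} [NormedAddCommGroup E]

lemma fderiv_comp_inv_smul_sub [NormedSpace ℝ E] (f : E → ℝ) (x : E) (R : ℝ) (y : E) :
    fderiv ℝ (fun z => f (R⁻¹ • (z - x))) y = R⁻¹ • fderiv ℝ f (R⁻¹ • (y - x)) := by
  rw [fderiv_comp_sub (f := fun z => f (R⁻¹ • z)), fderiv_comp_smul]

variable [InnerProductSpace ℝ E] [FiniteDimensional ℝ E] [MeasurableSpace E] [BorelSpace E]

lemma integral_norm_fderiv_comp_inv_smul_sub_sq (f : E → ℝ) (x : E) {R : ℝ} (hR : 0 ≤ R) :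
    ∫ y, ‖fderiv ℝ (fun z => f (R⁻¹ • (z - x))) y‖ ^ 2 =
      (∫ y, ‖fderiv ℝ f y‖ ^ 2) * (R ^ finrank ℝ E / R ^ 2) := by
  simp only [fderiv_comp_inv_smul_sub, norm_smul, mul_pow, integral_const_mul]
  rw [integral_sub_right_eq_self fun y => ‖fderiv ℝ f (R⁻¹ • y)‖ ^ 2,
    Measure.integral_comp_inv_smul_of_nonneg volume (fun y => ‖fderiv ℝ f y‖ ^ 2) hR]
  simp only [norm_inv, Real.norm_eq_abs, inv_pow, sq_abs, smul_eq_mul]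
  ring

lemma exists_cutoff_integral_norm_fderiv_sq_eq (E : Type*) [NormedAddCommGroup E]
    [InnerProductSpace ℝ E] [FiniteDimensional ℝ E] [MeasurableSpace E] [BorelSpace E]
    {θ : ℝ} (hθ : θ ∈ Set.Ioo 0 1) :
    ∃ L : ℝ, ∀ (x : E) (R : ℝ), 0 < R → ∃ χ : E → ℝ, ContDiff ℝ 1 χ ∧ HasCompactSupport χ ∧
      tsupport χ ⊆ ball x R ∧ (∀ y ∈ ball x (R * θ), χ y = 1) ∧
      ∫ y, ‖fderiv ℝ χ y‖ ^ 2 = L * (R ^ finrank ℝ E / R ^ 2) := by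
  obtain ⟨hθ0, hθ1⟩ := hθ
  let f : ContDiffBump (0 : E) := ⟨θ, (1 + θ) / 2, hθ0, by linarith⟩
  refine ⟨∫ y, ‖fderiv ℝ f y‖ ^ 2, fun x R hR => ?_⟩
  have hdist (y : E) : ‖R⁻¹ • (y - x)‖ = dist y x / R := by
    rw [norm_smul, norm_inv, Real.norm_of_nonneg hR.le, dist_eq_norm, inv_mul_eq_div]
  have htsupp : tsupport (fun y => f (R⁻¹ • (y - x))) ⊆ closedBall x (R * ((1 + θ) / 2)) := by
    refine (tsupport_comp_subset_preimage f (by fun_prop)).trans fun y hy => ?_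
    rw [Set.mem_preimage, f.tsupport_eq, mem_closedBall_zero_iff, hdist, div_le_iff₀' hR] at hy
    exact hy
  refine ⟨fun y => f (R⁻¹ • (y - x)), ?_, ?_, ?_, fun y hy => ?_, ?_⟩
  · exact f.contDiff.comp (by fun_prop)
  · exact (isCompact_closedBall _ _).of_isClosed_subset (isClosed_tsupport _) htsupp
  · exact htsupp.trans (closedBall_subset_ball (mul_lt_of_lt_one_right hR (by linarith)))
  · refine f.one_of_mem_closedBall ?_
    rw [mem_closedBall_zero_iff, hdist, div_le_iff₀' hR]
    exact (mem_ball.mp hy).le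
  · exact integral_norm_fderiv_comp_inv_smul_sub_sq f x hR.le

end Cutoff

section LogGradient

variable {E : Type*} [NormedAddCommGroup E] [InnerProductSpace ℝ E] [FiniteDimensional ℝ E]
  [MeasurableSpace E] [BorelSpace E]

variable (E) in
lemma exists_forall_setIntegral_norm_fderiv_div_sq_le {θ : ℝ} (hθ : θ ∈ Set.Ioo 0 1) :
    ∃ L : ℝ, ∀ (w : E → ℝ) (x : E) (R : ℝ), 0 < R → SuperharmonicOn w (ball x R) →
      (∀ y ∈ ball x R, 0 < w y) →
      ∫ y in ball x (R * θ), (‖fderiv ℝ w y‖ / w y) ^ 2 ≤ L * (R ^ finrank ℝ E / R ^ 2) := by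
  obtain ⟨L, hL⟩ := exists_cutoff_integral_norm_fderiv_sq_eq E hθ
  refine ⟨4 * L, fun w x R hR hw hw0 => ?_⟩
  obtain ⟨χ, hχ, hχc, hsupp, hχ1, hχL⟩ := hL x R hR
  calc ∫ y in ball x (R * θ), (‖fderiv ℝ w y‖ / w y) ^ 2
    _ = ∫ y in ball x (R * θ), (χ y * (‖fderiv ℝ w y‖ / w y)) ^ 2 :=
      setIntegral_congr_fun measurableSet_ball fun y hy => by simp only [hχ1 y hy, one_mul]
    _ ≤ ∫ y, (χ y * (‖fderiv ℝ w y‖ / w y)) ^ 2 :=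
      setIntegral_le_integral (integrable_sq_mul_norm_fderiv_div hχ.continuous hχc
        (fun y hy => (hw.contDiffAt y (hsupp hy)).of_le one_le_two)
        fun y hy => (hw0 y (hsupp hy)).ne') (Eventually.of_forall fun y => sq_nonneg _)
    _ ≤ 4 * ∫ y, ‖fderiv ℝ χ y‖ ^ 2 :=
      (hw.mono hsupp).integral_sq_mul_norm_fderiv_div_le hχ hχc fun y hy => hw0 y (hsupp hy)
    _ = 4 * L * (R ^ finrank ℝ E / R ^ 2) := by rw [hχL, mul_assoc]

end LogGradient

section Interpolation

open Real

lemma rpow_le_mul_sq_add_rpow {q a b : ℝ} (hq0 : 0 < q) (hq2 : q < 2) (ha : 0 ≤ a) (hb : 0 < b) :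
    a ^ q ≤ b * a ^ 2 + b⁻¹ ^ (q / (2 - q)) := by
  have hq : 0 < 2 - q := sub_pos.mpr hq2
  rcases le_or_gt (a ^ (2 - q)) b⁻¹ with hsmall | hlarge
  · calc a ^ q
      _ = (a ^ (2 - q)) ^ (q / (2 - q)) := by rw [← rpow_mul ha, mul_div_cancel₀ _ hq.ne']
      _ ≤ b⁻¹ ^ (q / (2 - q)) := by gcongr
      _ ≤ b * a ^ 2 + b⁻¹ ^ (q / (2 - q)) := le_add_of_nonneg_left (by positivity)
  · calc a ^ q
      _ ≤ b * a ^ (2 - q) * a ^ q :=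
        le_mul_of_one_le_left (rpow_nonneg ha q) ((inv_lt_iff_one_lt_mul₀' hb).mp hlarge).le
      _ = b * a ^ 2 := by rw [mul_assoc, ← rpow_add' ha (by simp), sub_add_cancel, rpow_two]
      _ ≤ b * a ^ 2 + b⁻¹ ^ (q / (2 - q)) := le_add_of_nonneg_right (by positivity)

lemma exists_forall_one_add_rpow_le {p ε : ℝ} (hp : 0 ≤ p) (hε : 0 < ε) :
    ∃ K : ℝ, ∀ t, 0 ≤ t → (1 + t) ^ p ≤ ε * exp t + K := by
  obtain ⟨T, hT⟩ := eventually_atTop.mp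
    ((isLittleO_rpow_exp_atTop p).def (div_pos hε (exp_pos 1)))
  refine ⟨(max 0 T) ^ p, fun t ht => ?_⟩
  rcases le_total T (1 + t) with hTt | htT
  · have hlarge : (1 + t) ^ p ≤ ε / exp 1 * exp (1 + t) := by
      simpa [abs_of_nonneg (rpow_nonneg (add_nonneg zero_le_one ht) p)] using hT (1 + t) hTt
    rw [exp_add, ← mul_assoc, div_mul_cancel₀ _ (exp_ne_zero 1)] at hlarge
    exact hlarge.trans (le_add_of_nonneg_right (by positivity))
  · have hsmall : (1 + t) ^ p ≤ (max 0 T) ^ p := by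
      gcongr
      exact htT.trans (le_max_right 0 T)
    exact hsmall.trans (le_add_of_nonneg_left (by positivity))

lemma exists_forall_rpow_le_mul_div_one_add_sq_add_exp {q ε : ℝ} (hq0 : 0 < q) (hq2 : q < 2)
    (hε : 0 < ε) :
    ∃ K : ℝ, ∀ a t, 0 ≤ a → 0 ≤ t → a ^ q ≤ ε * ((a / (1 + t)) ^ 2 + exp t) + K := by
  set p : ℝ := q / (2 - q)
  have hp : 0 ≤ p := div_nonneg hq0.le (sub_nonneg.mpr hq2.le)
  have hεp : 0 < ε⁻¹ ^ p := by positivity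
  obtain ⟨K, hK⟩ := exists_forall_one_add_rpow_le (mul_nonneg zero_le_two hp) (div_pos hε hεp)
  refine ⟨ε⁻¹ ^ p * K, fun a t ha ht => ?_⟩
  have hpow : (ε / (1 + t) ^ 2)⁻¹ ^ p = ε⁻¹ ^ p * (1 + t) ^ (2 * p) := by
    rw [inv_div, div_eq_inv_mul, mul_rpow (by positivity) (by positivity), ← rpow_two,
      ← rpow_mul (by positivity)]
  calc a ^ q
    _ ≤ ε / (1 + t) ^ 2 * a ^ 2 + (ε / (1 + t) ^ 2)⁻¹ ^ p :=
      rpow_le_mul_sq_add_rpow hq0 hq2 ha (by positivity)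
    _ = ε * (a / (1 + t)) ^ 2 + ε⁻¹ ^ p * (1 + t) ^ (2 * p) := by
      rw [hpow, div_mul_eq_mul_div, mul_div_assoc, div_pow]
    _ ≤ ε * (a / (1 + t)) ^ 2 + ε⁻¹ ^ p * (ε / ε⁻¹ ^ p * exp t + K) := by
      gcongr
      exact hK t ht
    _ = ε * ((a / (1 + t)) ^ 2 + exp t) + ε⁻¹ ^ p * K := by
      field_simp
      ring

end Interpolation

section Gradient

lemma integrableOn_ball_of_continuousOn_ball {X F : Type*} [MetricSpace X] [ProperSpace X]
    [MeasurableSpace X] [OpensMeasurableSpace X] [NormedAddCommGroup F] {μ : Measure X}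
    [IsFiniteMeasureOnCompacts μ] {f : X → F} {x : X} {R r : ℝ} (hf : ContinuousOn f (ball x R))
    (hr : r < R) : IntegrableOn f (ball x r) μ :=
  ((hf.mono (closedBall_subset_ball hr)).integrableOn_compact
    (isCompact_closedBall x r)).mono_set ball_subset_closedBall

lemma setIntegral_le_mul_add_of_forall_le {X : Type*} [MeasurableSpace X] {μ : Measure X}
    {s : Set X} (hs : MeasurableSet s) (hμs : μ s ≠ ⊤) {f g h : X → ℝ} {ε K : ℝ}
    (hf : ∀ y ∈ s, 0 ≤ f y) (hg : IntegrableOn g s μ) (hh : IntegrableOn h s μ)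
    (hle : ∀ y ∈ s, f y ≤ ε * (g y + h y) + K) :
    ∫ y in s, f y ∂μ ≤ ε * ((∫ y in s, g y ∂μ) + ∫ y in s, h y ∂μ) + μ.real s * K := by
  have hgh : IntegrableOn (fun y => ε * (g y + h y)) s μ := (hg.add hh).const_mul ε
  have hK : IntegrableOn (fun _ => K) s μ := integrableOn_const hμs
  calc ∫ y in s, f y ∂μ
    _ ≤ ∫ y in s, (ε * (g y + h y) + K) ∂μ :=
      integral_mono_of_nonneg (ae_restrict_of_forall_mem hs hf) (hgh.add hK)
        (ae_restrict_of_forall_mem hs hle)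
    _ = ε * ((∫ y in s, g y ∂μ) + ∫ y in s, h y ∂μ) + μ.real s * K := by
      rw [integral_add hgh hK, integral_const_mul, integral_add hg hh, setIntegral_const,
        smul_eq_mul]

variable {E : Type*} [NormedAddCommGroup E] [InnerProductSpace ℝ E] [FiniteDimensional ℝ E]
  [MeasurableSpace E] [BorelSpace E]

lemma measureReal_ball_of_pos (μ : Measure E) [μ.IsAddHaarMeasure] (x : E) {r : ℝ} (hr : 0 < r) :
    μ.real (ball x r) = r ^ finrank ℝ E * μ.real (ball 0 1) := by
  rw [measureReal_def, Measure.addHaar_ball_of_pos μ x hr, ENNReal.toReal_mul,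
    ENNReal.toReal_ofReal (pow_nonneg hr.le _), measureReal_def]

variable (E) in
lemma exists_forall_setIntegral_norm_fderiv_rpow_le {q θ : ℝ} (hq0 : 0 < q) (hq2 : q < 2)
    (hθ : θ ∈ Set.Ioo 0 1) :
    ∃ L : ℝ, ∀ ε > 0, ∃ K : ℝ, ∀ (u : E → ℝ) (x : E) (R : ℝ), 0 < R →
      SuperharmonicOn u (ball x R) → (∀ y ∈ ball x R, 0 ≤ u y) →
      ∫ y in ball x (R * θ), ‖fderiv ℝ u y‖ ^ q ≤
        ε * (L * (R ^ finrank ℝ E / R ^ 2) + ∫ y in ball x (R * θ), Real.exp (u y)) +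
          K * R ^ finrank ℝ E := by
  obtain ⟨L, hL⟩ := exists_forall_setIntegral_norm_fderiv_div_sq_le E hθ
  refine ⟨L, fun ε hε => ?_⟩
  obtain ⟨K, hK⟩ := exists_forall_rpow_le_mul_div_one_add_sq_add_exp hq0 hq2 hε
  refine ⟨θ ^ finrank ℝ E * volume.real (ball (0 : E) 1) * K, fun u x R hR hu hu0 => ?_⟩
  have hr : R * θ < R := mul_lt_of_lt_one_right hR hθ.2
  have hpos : ∀ y ∈ ball x R, 0 < 1 + u y := fun y hy =>
    add_pos_of_pos_of_nonneg one_pos (hu0 y hy)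
  have hu_cont : ContinuousOn u (ball x R) := fun y hy =>
    (hu.contDiffAt y hy).continuousAt.continuousWithinAt
  have hDu_cont : ContinuousOn (fderiv ℝ u) (ball x R) := fun y hy =>
    ((hu.contDiffAt y hy).fderiv_right (m := 1) (by norm_num)).continuousAt.continuousWithinAt
  have hlog_int : IntegrableOn (fun y => (‖fderiv ℝ u y‖ / (1 + u y)) ^ 2) (ball x (R * θ)) :=
    integrableOn_ball_of_continuousOn_ball
      ((hDu_cont.norm.div (continuousOn_const.add hu_cont) fun y hy => (hpos y hy).ne').pow 2) hr
  have hlog_le : ∫ y in ball x (R * θ), (‖fderiv ℝ u y‖ / (1 + u y)) ^ 2 ≤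
      L * (R ^ finrank ℝ E / R ^ 2) := by
    simpa only [fderiv_const_add] using hL (fun y => 1 + u y) x R hR (hu.const_add 1) hpos
  have hexp_int : IntegrableOn (fun y => Real.exp (u y)) (ball x (R * θ)) :=
    integrableOn_ball_of_continuousOn_ball hu_cont.rexp hr
  calc ∫ y in ball x (R * θ), ‖fderiv ℝ u y‖ ^ q
    _ ≤ ε * ((∫ y in ball x (R * θ), (‖fderiv ℝ u y‖ / (1 + u y)) ^ 2) +
          ∫ y in ball x (R * θ), Real.exp (u y)) + volume.real (ball x (R * θ)) * K :=
      setIntegral_le_mul_add_of_forall_le measurableSet_ball measure_ball_lt_top.ne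
        (fun y _ => by positivity) hlog_int hexp_int fun y hy =>
          hK _ _ (norm_nonneg _) (hu0 y (ball_subset_ball hr.le hy))
    _ ≤ ε * (L * (R ^ finrank ℝ E / R ^ 2) + ∫ y in ball x (R * θ), Real.exp (u y)) +
          θ ^ finrank ℝ E * volume.real (ball (0 : E) 1) * K * R ^ finrank ℝ E := by
      rw [measureReal_ball_of_pos _ _ (mul_pos hR hθ.1)]
      refine add_le_add (by gcongr) (le_of_eq ?_)
      ring

lemma tendsto_setIntegral_norm_fderiv_rpow_of_superharmonicOn_ball {ι : Type*} {l : Filter ι}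
    {u : ι → E → ℝ} {x : ι → E} {R : ι → ℝ} {C q θ : ℝ} (hdim : 2 ≤ finrank ℝ E)
    (hq0 : 0 < q) (hq2 : q < 2) (hθ : θ ∈ Set.Ioo 0 1) (hR : ∀ i, 0 < R i)
    (hR0 : Tendsto R l (𝓝 0)) (hu : ∀ i, SuperharmonicOn (u i) (ball (x i) (R i)))
    (hu0 : ∀ i, ∀ y ∈ ball (x i) (R i), 0 ≤ u i y)
    (hC : ∀ i, ∫ y in ball (x i) (R i * θ), Real.exp (u i y) ≤ C) :
    Tendsto (fun i => ∫ y in ball (x i) (R i * θ), ‖fderiv ℝ (u i) y‖ ^ q) l (𝓝 0) := by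
  obtain ⟨L, hL⟩ := exists_forall_setIntegral_norm_fderiv_rpow_le E hq0 hq2 hθ
  refine tendsto_order.mpr ⟨fun a ha => Eventually.of_forall fun i =>
    ha.trans_le (integral_nonneg fun y => by positivity), fun η hη => ?_⟩
  set M : ℝ := |L| + |C| + 1
  have hM : 0 < M := by positivity
  obtain ⟨K, hK⟩ := hL (η / (2 * M)) (by positivity)
  have hKR : Tendsto (fun i => K * R i ^ finrank ℝ E) l (𝓝 0) := by
    simpa [(zero_lt_two.trans_le hdim).ne'] using (hR0.pow (finrank ℝ E)).const_mul K
  filter_upwards [hKR.eventually_lt_const (half_pos hη), hR0.eventually_le_const one_pos]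
    with i hKi hRi
  have hscale : R i ^ finrank ℝ E / R i ^ 2 ≤ 1 :=
    div_le_one_of_le₀ (pow_le_pow_of_le_one (hR i).le hRi hdim) (sq_nonneg _)
  have hLM : L * (R i ^ finrank ℝ E / R i ^ 2) ≤ |L| :=
    (mul_le_mul_of_nonneg_right (le_abs_self L) (by have := hR i; positivity)).trans
      (mul_le_of_le_one_right (abs_nonneg L) hscale)
  calc ∫ y in ball (x i) (R i * θ), ‖fderiv ℝ (u i) y‖ ^ q
    _ ≤ η / (2 * M) * (L * (R i ^ finrank ℝ E / R i ^ 2) +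
          ∫ y in ball (x i) (R i * θ), Real.exp (u i y)) + K * R i ^ finrank ℝ E :=
      hK (u i) (x i) (R i) (hR i) (hu i) (hu0 i)
    _ ≤ η / (2 * M) * M + K * R i ^ finrank ℝ E := by
      gcongr
      linarith [hC i, le_abs_self C]
    _ = η / 2 + K * R i ^ finrank ℝ E := by field_simp
    _ < η := by linarith

end Gradient

section Disk

lemma ball_infDist_frontier_subset {E : Type*} [SeminormedAddCommGroup E] [NormedSpace ℝ E]
    {s : Set E} (hs : IsOpen s) {x : E} (hx : x ∈ s) :
    ball x (infDist x (frontier s)) ⊆ s := by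
  rcases (infDist_nonneg (x := x) (s := frontier s)).eq_or_lt with hzero | hpos
  · simp [← hzero]
  · refine (convex_ball x _).isPreconnected.subset_of_closure_inter_subset hs
      ⟨x, mem_ball_self hpos, hx⟩ fun y ⟨hy_closure, hy_ball⟩ => ?_
    by_contra hys
    exact ball_infDist_subset_compl hy_ball ⟨hy_closure, by rwa [hs.interior_eq]⟩

lemma infDist_frontier_pos {X : Type*} [PseudoMetricSpace X] {s : Set X} (hs : IsOpen s)
    (hfr : (frontier s).Nonempty) {x : X} (hx : x ∈ s) : 0 < infDist x (frontier s) :=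
  (isClosed_frontier.notMem_iff_infDist_pos hfr).mp fun hx_frontier =>
    hx_frontier.2 (by rwa [hs.interior_eq])

lemma lapl_eq_laplacian {u : E2 → ℝ} {x : E2} (hu : ContDiffAt ℝ 2 u x) : lapl u x = Δ u x := by
  rw [laplacian_eq_sum_fderiv_fderiv (EuclideanSpace.basisFun (Fin 2) ℝ), Fin.sum_univ_two]
  simp only [← fderiv_fderiv_apply hu, EuclideanSpace.basisFun_apply]
  rfl

lemma superharmonicOn_of_lapl_nonpos {u : E2 → ℝ} {Ω : Set E2} (hΩ : IsOpen Ω)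
    (hu : ContDiffOn ℝ 2 u Ω) (hlapl : ∀ x ∈ Ω, lapl u x ≤ 0) : SuperharmonicOn u Ω where
  contDiffAt x hx := hu.contDiffAt (hΩ.mem_nhds hx)
  laplacian_nonpos x hx := by
    rw [← lapl_eq_laplacian (hu.contDiffAt (hΩ.mem_nhds hx))]
    exact hlapl x hx

end Disk

theorem stmt14_general {E : Type*} [NormedAddCommGroup E] [InnerProductSpace ℝ E]
    [FiniteDimensional ℝ E] [MeasurableSpace E] [BorelSpace E] {ι : Type*} {l : Filter ι}
    {Ω : Set E} {u : ι → E → ℝ} {x : ι → E} {δ : ι → ℝ} {C q θ : ℝ}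
    (hdim : 2 ≤ finrank ℝ E) (hΩ : IsOpen Ω) (hΩb : Bornology.IsBounded Ω)
    (hu : ∀ i, SuperharmonicOn (u i) Ω)
    (huc : ∀ i, ContinuousOn (u i) (closure Ω)) (hfr : ∀ i, ∀ y ∈ frontier Ω, 0 ≤ u i y)
    (hC : ∀ i, ∫ y in Ω, Real.exp (u i y) ≤ C) (hδ : ∀ i, 0 < δ i) (hδ0 : Tendsto δ l (𝓝 0))
    (hball : ∀ i, ball (x i) (δ i) ⊆ Ω) (hq0 : 0 < q) (hq2 : q < 2) (hθ : θ ∈ Set.Ioo 0 1) :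
    Tendsto (fun i => (∫ y in ball (x i) (δ i * θ), ‖fderiv ℝ (u i) y‖ ^ q) ^ (1 / q)) l
      (𝓝 0) := by
  have : Nontrivial E := Module.finrank_pos_iff.mp (zero_lt_two.trans_le hdim)
  have hu0 : ∀ i, ∀ y ∈ Ω, 0 ≤ u i y := fun i y hy =>
    (hu i).nonneg_of_frontier_nonneg hΩ hΩb (huc i) (hfr i) hy
  have hexp_int (i : ι) : IntegrableOn (fun y => Real.exp (u i y)) Ω :=
    ((huc i).rexp.integrableOn_compact hΩb.isCompact_closure).mono_set subset_closure
  have hsub (i : ι) : ball (x i) (δ i * θ) ⊆ Ω :=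
    (ball_subset_ball (mul_le_of_le_one_right (hδ i).le hθ.2.le)).trans (hball i)
  have htend := tendsto_setIntegral_norm_fderiv_rpow_of_superharmonicOn_ball hdim hq0 hq2 hθ hδ hδ0
    (fun i => (hu i).mono (hball i)) (fun i y hy => hu0 i y (hball i hy)) fun i =>
      (setIntegral_mono_set (hexp_int i) (Eventually.of_forall fun y => (Real.exp_pos _).le)
        (hsub i).eventuallyLE).trans (hC i)
  have hq : 0 < 1 / q := one_div_pos.mpr hq0
  simpa only [Real.zero_rpow hq.ne'] using htend.rpow_const (Or.inr hq.le)

theorem stmt14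
    (b A s C₀ : ℝ) (hs1 : 1/2 < s) (hs2 : s ≤ 1)
    (V u : ℕ → E2 → ℝ) (x_ : ℕ → E2) (δ r : ℕ → ℝ) (v : ℕ → E2 → ℝ)
    (hu : ∀ i, ContDiffOn ℝ 2 (u i) (closedBall (0:E2) 1))
    (hVb : ∀ i, ∀ x ∈ ball (0:E2) 1, 0 ≤ V i x ∧ V i x ≤ b)
    (hVhol : ∀ i, ∀ x ∈ ball (0:E2) 1, ∀ y ∈ ball (0:E2) 1, |V i x - V i y| ≤ A * ‖x - y‖ ^ s)
    (hpde : ∀ i, ∀ x ∈ ball (0:E2) 1, -(lapl (u i) x) = V i x * Real.exp (u i x))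
    (hbc : ∀ i, ∀ x ∈ sphere (0:E2) 1, u i x = 0)
    (hint : ∀ i, (∫ y in ball (0:E2) 1, Real.exp (u i y)) ≤ C₀)
    (hxmem : ∀ i, x_ i ∈ ball (0:E2) 1)
    (hmax : ∀ i, ∀ y ∈ closedBall (0:E2) 1, u i y ≤ u i (x_ i))
    (hblow : Tendsto (fun i => u i (x_ i)) atTop atTop)
    (hδ : ∀ i, δ i = Metric.infDist (x_ i) (sphere (0:E2) 1))
    (hδ0 : Tendsto δ atTop (nhds 0))
    (hr : ∀ i, r i = Real.exp (-(u i (x_ i)) / 2))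
    (hrδ : Tendsto (fun i => r i / δ i) atTop (nhds 0))
    (hmass : Tendsto (fun i => ∫ y in ball (x_ i) (δ i / 2), V i y * Real.exp (u i y)) atTop
      (nhds (8 * Real.pi)))
    (hbound : ∀ ε : ℝ, 0 < ε → ε < 1 → ∃ Cε : ℝ, ∀ i, ∀ y : E2, ‖y‖ = ε →
      u i (x_ i + δ i • y) ≤ Cε)
    (hv : ∀ i θ, v i θ = u i (x_ i + r i • θ) - u i (x_ i)) :
    ∀ q : ℝ, 1 ≤ q → q < 2 → ∀ ε' : ℝ, ε' ∈ Set.Ioo (0:ℝ) (1/4) →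
      Tendsto (fun i => (∫ y in ball (x_ i) (δ i * ε'), ‖fderiv ℝ (u i) y‖ ^ q) ^ (1 / q))
        atTop (nhds 0) := by
  intro q hq1 hq2 ε' hε'
  have hfr : frontier (ball (0 : E2) 1) = sphere 0 1 := frontier_ball 0 one_ne_zero
  have hfr_nonempty : (frontier (ball (0 : E2) 1)).Nonempty := by
    rw [hfr]
    exact NormedSpace.sphere_nonempty.mpr zero_le_one
  have hu_super : ∀ i, SuperharmonicOn (u i) (ball 0 1) := fun i =>
    superharmonicOn_of_lapl_nonpos isOpen_ball ((hu i).mono ball_subset_closedBall) fun x hx =>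
      neg_nonneg.mp ((mul_nonneg (hVb i x hx).1 (Real.exp_pos _).le).trans_eq (hpde i x hx).symm)
  simp only [← hfr] at hδ hbc
  exact stmt14_general (by simp) isOpen_ball isBounded_ball hu_super
    (fun i => (hu i).continuousOn.mono closure_ball_subset_closedBall)
    (fun i y hy => (hbc i y hy).ge) hint
    (fun i => hδ i ▸ infDist_frontier_pos isOpen_ball hfr_nonempty (hxmem i)) hδ0
    (fun i => hδ i ▸ ball_infDist_frontier_subset isOpen_ball (hxmem i))
    (zero_lt_one.trans_le hq1) hq2 ⟨hε'.1, hε'.2.trans (by norm_num)⟩
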